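/- arXiv:2208.11299 — 2 statements merged into one kernel-verified Lean document; each statement's English description precedes it below -/
import Mathlib

section
/- Let m ≥ 3 be an integer and A > 0. For u ∈ (0,A), let P_u be the probability measure on (0, A−u) with density z ↦ (m−1)(A−u−z)^{m−2}/(A−u)^{m−1} with respect to Lebesgue measure. Then for all x, x' ∈ (0,A) with x ≠ x', the total variation distance satisfies d_TV(P_x, P_{x'}) = |x−x'|^{m−1} / |(A−x)^{(m−1)/(m−2)} − (A−x')^{(m−1)/(m−2)}|^{m−2}, and consequently d_TV(P_x, P_{x'}) ≤ ((m−2)/(m−1))^{m−2} · |x−x'| / (A − max(x,x')). -/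
open MeasureTheory

/-- The probability measure on `(0, A−u)` with density
`z ↦ (m−1)(A−u−z)^{m−2}/(A−u)^{m−1}` with respect to Lebesgue measure: the
one-coordinate conditional distribution arising from the uniform distribution on the
corner of the `n`-cube. -/
noncomputable def cornerCond (m : ℕ) (A u : ℝ) : Measure ℝ :=
  (volume.restrict (Set.Ioo (0 : ℝ) (A - u))).withDensity fun z =>
    ENNReal.ofReal (((m : ℝ) - 1) * (A - u - z) ^ (m - 2) / (A - u) ^ (m - 1))

/-- The total variation distance between two measures: the supremum over measurable
sets of the absolute difference of the probabilities they assign. -/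
noncomputable def tvDist {α : Type*} [MeasurableSpace α] (P Q : Measure α) : ℝ :=
  sSup { r : ℝ | ∃ B : Set α, MeasurableSet B ∧ r = |(P B).toReal - (Q B).toReal| }

/-!
For `a = A - u` the `(m-2)`-th root of the density of `P_u` is, up to a factor common to all `u`,
the function `z ↦ (a - z) / a ^ p` with `p = (m-1)/(m-2)`, truncated at `0`. The densities of two
such measures, with `a > b`, therefore cross exactly once, at the root `t` of the secant of
`y ↦ y ^ p` through `a` and `b`, and `(t, ∞)` is a Hahn set. The total variation distance is the
difference of the two tail probabilities `((a - t) / a) ^ (m-1)` and `((b - t) / b) ^ (m-1)`,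
where `(a - t) / a ^ p = (b - t) / b ^ p = (a - b) / (a ^ p - b ^ p)`. The upper bound follows
because the convex function `y ↦ y ^ p` lies above its tangent at `b`.
-/

open Set

section TotalVariation

variable {Ω : Type*} [MeasurableSpace Ω] {P Q : Measure Ω} {s : Set Ω}

lemma tvDist_comm (P Q : Measure Ω) : tvDist P Q = tvDist Q P := by
  simp only [tvDist, abs_sub_comm]

lemma measureReal_sub_le_of_isHahnDecomposition [IsFiniteMeasure P] [IsFiniteMeasure Q]
    (h : IsHahnDecomposition Q P s) {B : Set Ω} (hB : MeasurableSet B) :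
    P.real B - Q.real B ≤ P.real s - Q.real s := by
  have outside : P.real (B \ s) ≤ Q.real (B \ s) := by
    have := ENNReal.toReal_mono (measure_ne_top _ _) (h.ge_on_compl B)
    simpa only [← measureReal_def, measureReal_restrict_apply hB, ← sdiff_eq] using this
  have inside : Q.real (s \ B) ≤ P.real (s \ B) := by
    have := ENNReal.toReal_mono (measure_ne_top _ _) (h.le_on Bᶜ)
    simpa only [← measureReal_def, measureReal_restrict_apply hB.compl, inter_comm Bᶜ,
      ← sdiff_eq] using this
  have hPB := measureReal_inter_add_sdiff (μ := P) (s := B) h.measurableSet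
  have hQB := measureReal_inter_add_sdiff (μ := Q) (s := B) h.measurableSet
  have hPs := measureReal_inter_add_sdiff (μ := P) (s := s) hB
  have hQs := measureReal_inter_add_sdiff (μ := Q) (s := s) hB
  rw [inter_comm] at hPs hQs
  linarith

theorem tvDist_eq_of_isHahnDecomposition [IsProbabilityMeasure P] [IsProbabilityMeasure Q]
    (h : IsHahnDecomposition Q P s) : tvDist P Q = P.real s - Q.real s := by
  have upper {B : Set Ω} (hB : MeasurableSet B) := measureReal_sub_le_of_isHahnDecomposition h hB
  have nonneg : 0 ≤ P.real s - Q.real s := by simpa using upper MeasurableSet.empty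
  refine IsGreatest.csSup_eq ⟨⟨s, h.measurableSet, (abs_of_nonneg nonneg).symm⟩, ?_⟩
  rintro _ ⟨B, hB, rfl⟩
  refine abs_le.2 ⟨?_, upper hB⟩
  have := upper hB.compl
  rw [probReal_compl_eq_one_sub hB, probReal_compl_eq_one_sub hB] at this
  simp only [measureReal_def] at this ⊢
  linarith

lemma isHahnDecomposition_withDensity {μ : Measure Ω} {f g : Ω → ENNReal}
    (hs : MeasurableSet s) (hfg : ∀ z ∈ s, f z ≤ g z) (hgf : ∀ z ∉ s, g z ≤ f z) :
    IsHahnDecomposition (μ.withDensity f) (μ.withDensity g) s where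
  measurableSet := hs
  le_on := by
    simpa only [restrict_withDensity hs] using withDensity_mono (ae_restrict_of_forall_mem hs hfg)
  ge_on_compl := by
    simpa only [restrict_withDensity hs.compl] using
      withDensity_mono (ae_restrict_of_forall_mem hs.compl hgf)

end TotalVariation

section RealPowers

variable {a b : ℝ}

lemma rpow_succ_div_pow {k : ℕ} (hk : k ≠ 0) (ha : 0 ≤ a) :
    (a ^ (((k : ℝ) + 1) / k)) ^ k = a ^ (k + 1) := by
  rw [← Real.rpow_mul_natCast ha, div_mul_cancel₀ _ (Nat.cast_ne_zero.2 hk)]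
  exact_mod_cast Real.rpow_natCast a (k + 1)

lemma rpow_mul_div_pow_succ {k : ℕ} (hk : k ≠ 0) (ha : 0 < a) (r : ℝ) :
    (a ^ (((k : ℝ) + 1) / k) * r / a) ^ (k + 1) = a ^ (((k : ℝ) + 1) / k) * r ^ (k + 1) := by
  have hp : 0 < a ^ (((k : ℝ) + 1) / k) := Real.rpow_pos_of_pos ha _
  rw [div_pow, ← rpow_succ_div_pow hk ha.le, mul_pow, pow_succ (a ^ _), mul_assoc,
    mul_div_cancel_left₀ _ (pow_ne_zero k hp.ne')]

lemma rpow_tangent_le {p : ℝ} (hp : 1 ≤ p) (ha : 0 ≤ a) (hb : 0 < b) :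
    p * b ^ (p - 1) * (a - b) ≤ a ^ p - b ^ p := by
  have bernoulli : 1 + p * (a / b - 1) ≤ (a / b) ^ p := by
    simpa using one_add_mul_self_le_rpow_one_add (s := a / b - 1)
      (by linarith [div_nonneg ha hb.le]) hp
  rw [Real.div_rpow ha hb.le, le_div_iff₀ (Real.rpow_pos_of_pos hb p)] at bernoulli
  calc p * b ^ (p - 1) * (a - b) = (1 + p * (a / b - 1)) * b ^ p - b ^ p := by
        rw [Real.rpow_sub_one hb.ne']; field_simp; ring
    _ ≤ a ^ p - b ^ p := by linarith

-- `t` is where the secant of `y ↦ y ^ p` through `a` and `b` meets the axis.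
lemma exists_rpow_secant_root {p : ℝ} (hp : 1 < p) (hb : 0 < b) (hba : b < a) :
    ∃ t ∈ Ioo 0 b, a - t = a ^ p * ((a - b) / (a ^ p - b ^ p)) ∧
      b - t = b ^ p * ((a - b) / (a ^ p - b ^ p)) := by
  have ha : 0 < a := hb.trans hba
  have hpow : 0 < a ^ p - b ^ p := sub_pos.2 (Real.rpow_lt_rpow hb.le hba (by linarith))
  have slope_lt : b ^ p / b < a ^ p / a := by
    simpa only [Real.rpow_sub_one hb.ne', Real.rpow_sub_one ha.ne'] using
      Real.rpow_lt_rpow hb.le hba (sub_pos.2 hp)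
  rw [div_lt_div_iff₀ hb ha] at slope_lt
  set t := (a ^ p * b - b ^ p * a) / (a ^ p - b ^ p) with ht
  have t_pos : 0 < t := div_pos (by linarith) hpow
  have sub_a : a - t = a ^ p * ((a - b) / (a ^ p - b ^ p)) := by rw [ht]; field_simp; ring
  have sub_b : b - t = b ^ p * ((a - b) / (a ^ p - b ^ p)) := by rw [ht]; field_simp; ring
  have t_lt : 0 < b - t :=
    sub_b ▸ mul_pos (Real.rpow_pos_of_pos hb p) (div_pos (sub_pos.2 hba) hpow)
  exact ⟨t, ⟨t_pos, sub_pos.1 t_lt⟩, sub_a, sub_b⟩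

lemma sub_pow_succ_div_rpow_sub_rpow_pow_le {k : ℕ} (hk : k ≠ 0) (hb : 0 < b) (hba : b < a) :
    (a - b) ^ (k + 1) / (a ^ (((k : ℝ) + 1) / k) - b ^ (((k : ℝ) + 1) / k)) ^ k ≤
      ((k : ℝ) / (k + 1)) ^ k * (a - b) / b := by
  have hk' : (0 : ℝ) < k := by positivity
  have hab : 0 < a - b := sub_pos.2 hba
  have hp : ((k : ℝ) + 1) / k - 1 = (k : ℝ)⁻¹ := by field_simp; ring
  have tangent : ((k : ℝ) + 1) / k * b ^ (k : ℝ)⁻¹ * (a - b) ≤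
      a ^ (((k : ℝ) + 1) / k) - b ^ (((k : ℝ) + 1) / k) := by
    rw [← hp]
    refine rpow_tangent_le ?_ (hb.trans hba).le hb
    linarith [inv_pos.2 hk']
  calc _ ≤ (a - b) ^ (k + 1) / (((k : ℝ) + 1) / k * b ^ (k : ℝ)⁻¹ * (a - b)) ^ k := by
        gcongr
    _ = ((k : ℝ) / (k + 1)) ^ k * (a - b) / b := by
        rw [mul_pow, mul_pow, Real.rpow_inv_natCast_pow hb.le hk, div_pow, div_pow]
        field_simp
        ring

end RealPowers

section CornerConditional

variable {k : ℕ} {A u v t : ℝ}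

-- Truncation at `0` replaces the support condition `z < A - u`, so the base measure is free of `u`.
lemma cornerCond_eq_withDensity (hk : k ≠ 0) (hu : u < A) :
    cornerCond (k + 2) A u = (volume.restrict (Ioi 0)).withDensity fun z =>
      ENNReal.ofReal ((k + 1) * max ((A - u - z) / (A - u) ^ (((k : ℝ) + 1) / k)) 0 ^ k) := by
  have ha : 0 < A - u := sub_pos.2 hu
  have hp : 0 < (A - u) ^ (((k : ℝ) + 1) / k) := Real.rpow_pos_of_pos ha _
  rw [cornerCond, ← Iio_inter_Ioi, ← Measure.restrict_restrict measurableSet_Iio,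
    ← withDensity_indicator measurableSet_Iio]
  congr 1 with z
  rcases lt_or_ge z (A - u) with hz | hz
  · rw [indicator_of_mem (mem_Iio.2 hz), max_eq_left (by have := sub_pos.2 hz; positivity),
      div_pow, rpow_succ_div_pow hk ha.le]
    push_cast
    ring_nf
  · rw [indicator_of_notMem (notMem_Iio.2 hz),
      max_eq_right (div_nonpos_of_nonpos_of_nonneg (sub_nonpos.2 hz) hp.le), zero_pow hk]
    simp

lemma cornerCond_real_Ioi (ht : 0 ≤ t) (htu : t ≤ A - u) :
    (cornerCond (k + 2) A u).real (Ioi t) = ((A - u - t) / (A - u)) ^ (k + 1) := by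
  have hcont : Continuous fun z : ℝ => ((k : ℝ) + 1) * (A - u - z) ^ k / (A - u) ^ (k + 1) := by
    fun_prop
  have support : Ioi t ∩ Ioo 0 (A - u) = Ioo t (A - u) := by
    ext z; simp only [mem_inter_iff, mem_Ioi, mem_Ioo]; grind
  have nonneg : ∀ z ∈ Ioo t (A - u), 0 ≤ ((k : ℝ) + 1) * (A - u - z) ^ k / (A - u) ^ (k + 1) := by
    intro z hz
    have h₁ : 0 ≤ A - u - z := by linarith [hz.2]
    have h₂ : 0 ≤ A - u := ht.trans htu
    positivity
  calc (cornerCond (k + 2) A u).real (Ioi t)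
      = ∫ z in Ioo t (A - u), ((k : ℝ) + 1) * (A - u - z) ^ k / (A - u) ^ (k + 1) := by
        rw [integral_eq_lintegral_of_nonneg_ae (ae_restrict_of_forall_mem measurableSet_Ioo nonneg)
          hcont.aestronglyMeasurable, measureReal_def, cornerCond,
          withDensity_apply _ measurableSet_Ioi, Measure.restrict_restrict measurableSet_Ioi,
          support]
        push_cast
        ring_nf
    _ = ∫ z in t..(A - u), ((k : ℝ) + 1) * (A - u - z) ^ k / (A - u) ^ (k + 1) := by
        rw [intervalIntegral.integral_of_le htu, integral_Ioc_eq_integral_Ioo]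
    _ = ((A - u - t) / (A - u)) ^ (k + 1) := by
        rw [intervalIntegral.integral_div, intervalIntegral.integral_const_mul,
          intervalIntegral.integral_comp_sub_left (fun y => y ^ k), integral_pow]
        rw [sub_self, zero_pow k.succ_ne_zero, sub_zero, div_pow]
        field_simp

lemma isProbabilityMeasure_cornerCond (hu : u < A) :
    IsProbabilityMeasure (cornerCond (k + 2) A u) := by
  have support : Ioi (0 : ℝ) =ᵐ[cornerCond (k + 2) A u] univ :=
    Filter.eventuallyEq_univ.2 <| (withDensity_absolutelyContinuous _ _).ae_le <|
      (ae_restrict_mem measurableSet_Ioo).mono fun _ hz => hz.1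
  have ha : 0 < A - u := sub_pos.2 hu
  have mass : (cornerCond (k + 2) A u).real (Ioi 0) = 1 := by
    rw [cornerCond_real_Ioi le_rfl ha.le, sub_zero, div_self ha.ne', one_pow]
  exact ⟨by rwa [← measure_congr support, ← ENNReal.toReal_eq_one_iff]⟩

lemma isHahnDecomposition_cornerCond (hk : k ≠ 0) (huv : u < v) (hv : v < A)
    (ht : (A - v - t) / (A - v) ^ (((k : ℝ) + 1) / k) =
      (A - u - t) / (A - u) ^ (((k : ℝ) + 1) / k)) :
    IsHahnDecomposition (cornerCond (k + 2) A v) (cornerCond (k + 2) A u) (Ioi t) := by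
  have hβ : 0 < (A - v) ^ (((k : ℝ) + 1) / k) := Real.rpow_pos_of_pos (sub_pos.2 hv) _
  have hβα : (A - v) ^ (((k : ℝ) + 1) / k) < (A - u) ^ (((k : ℝ) + 1) / k) :=
    Real.rpow_lt_rpow (sub_pos.2 hv).le (by linarith) (by positivity)
  rw [cornerCond_eq_withDensity hk hv, cornerCond_eq_withDensity hk (huv.trans hv)]
  generalize (A - v) ^ (((k : ℝ) + 1) / k) = β at *
  generalize (A - u) ^ (((k : ℝ) + 1) / k) = α at *
  have affine_gap (z : ℝ) :
      (A - u - z) / α - (A - v - z) / β = (z - t) * (β⁻¹ - α⁻¹) := by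
    linear_combination -ht
  have slope_pos : 0 < β⁻¹ - α⁻¹ := sub_pos.2 (inv_strictAnti₀ hβ hβα)
  refine isHahnDecomposition_withDensity measurableSet_Ioi (fun z hz => ?_) (fun z hz => ?_)
  · have : (A - v - z) / β ≤ (A - u - z) / α :=
      sub_nonneg.1 (affine_gap z ▸ mul_nonneg (sub_nonneg.2 (le_of_lt hz)) slope_pos.le)
    gcongr
  · have : (A - u - z) / α ≤ (A - v - z) / β :=
      sub_nonpos.1 (affine_gap z ▸
        mul_nonpos_of_nonpos_of_nonneg (sub_nonpos.2 (not_lt.1 hz)) slope_pos.le)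
    gcongr

theorem tvDist_cornerCond_of_lt (hk : k ≠ 0) (huv : u < v) (hv : v < A) :
    tvDist (cornerCond (k + 2) A u) (cornerCond (k + 2) A v) =
      (v - u) ^ (k + 1) /
        ((A - u) ^ (((k : ℝ) + 1) / k) - (A - v) ^ (((k : ℝ) + 1) / k)) ^ k := by
  have hu : u < A := huv.trans hv
  have hb : 0 < A - v := sub_pos.2 hv
  have hba : A - v < A - u := by linarith
  have ha : 0 < A - u := hb.trans hba
  have hp : 1 < ((k : ℝ) + 1) / k := by
    rw [one_lt_div (by positivity)]; exact lt_add_one _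
  have := isProbabilityMeasure_cornerCond (k := k) hu
  have := isProbabilityMeasure_cornerCond (k := k) hv
  obtain ⟨t, ⟨ht, htv⟩, hat, hbt⟩ := exists_rpow_secant_root hp hb hba
  have hahn : IsHahnDecomposition (cornerCond (k + 2) A v) (cornerCond (k + 2) A u) (Ioi t) := by
    refine isHahnDecomposition_cornerCond hk huv hv ?_
    rw [hat, hbt, mul_div_cancel_left₀ _ (Real.rpow_pos_of_pos ha _).ne',
      mul_div_cancel_left₀ _ (Real.rpow_pos_of_pos hb _).ne']
  have gap_pos := sub_pos.2 (Real.rpow_lt_rpow hb.le hba (zero_lt_one.trans hp))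
  rw [sub_sub_sub_cancel_left] at hat hbt
  set α := (A - u) ^ (((k : ℝ) + 1) / k) with hα
  set β := (A - v) ^ (((k : ℝ) + 1) / k) with hβ
  calc tvDist (cornerCond (k + 2) A u) (cornerCond (k + 2) A v)
      = ((A - u - t) / (A - u)) ^ (k + 1) - ((A - v - t) / (A - v)) ^ (k + 1) := by
        rw [tvDist_eq_of_isHahnDecomposition hahn, cornerCond_real_Ioi ht.le (htv.trans hba).le,
          cornerCond_real_Ioi ht.le htv.le]
    _ = (α - β) * ((v - u) / (α - β)) ^ (k + 1) := by
        rw [hat, hbt, hα, hβ, rpow_mul_div_pow_succ hk ha, rpow_mul_div_pow_succ hk hb, ← sub_mul]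
    _ = (v - u) ^ (k + 1) / (α - β) ^ k := by
        rw [div_pow, mul_div_assoc', pow_succ' (α - β), mul_div_mul_left _ _ gap_pos.ne']

end CornerConditional

theorem tvDist_cornerCond_general
    (m : ℕ) (hm : 3 ≤ m) (A x x' : ℝ) (hx : x < A) (hx' : x' < A) (hxx : x ≠ x') :
    tvDist (cornerCond m A x) (cornerCond m A x') =
      |x - x'| ^ (m - 1) /
        |(A - x) ^ (((m : ℝ) - 1) / ((m : ℝ) - 2)) -
          (A - x') ^ (((m : ℝ) - 1) / ((m : ℝ) - 2))| ^ (m - 2) ∧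
    tvDist (cornerCond m A x) (cornerCond m A x') ≤
      (((m : ℝ) - 2) / ((m : ℝ) - 1)) ^ (m - 2) * |x - x'| / (A - max x x') := by
  wlog hlt : x < x' generalizing x x'
  · rw [tvDist_comm, abs_sub_comm x, abs_sub_comm ((A - x) ^ _), max_comm]
    exact this x' x hx' hx hxx.symm (hxx.lt_or_gt.resolve_left hlt)
  obtain ⟨k, rfl⟩ : ∃ k, m = k + 2 := ⟨m - 2, by omega⟩
  have hk : k ≠ 0 := by omega
  have hb : 0 < A - x' := sub_pos.2 hx'
  have hba : A - x' < A - x := by linarith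
  have hpow := Real.rpow_lt_rpow hb.le hba (z := ((k : ℝ) + 1) / k) (by positivity)
  have cast_sub_one : ((k + 2 : ℕ) : ℝ) - 1 = k + 1 := by push_cast; ring
  have cast_sub_two : ((k + 2 : ℕ) : ℝ) - 2 = k := by push_cast; ring
  rw [cast_sub_one, cast_sub_two, Nat.add_sub_cancel, show k + 2 - 1 = k + 1 from rfl,
    abs_sub_comm x, abs_of_pos (sub_pos.2 hlt), abs_of_pos (sub_pos.2 hpow), max_eq_right hlt.le,
    tvDist_cornerCond_of_lt hk hlt hx']
  exact ⟨rfl, by simpa only [sub_sub_sub_cancel_left] using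
    sub_pow_succ_div_rpow_sub_rpow_pow_le hk hb hba⟩

/-- **Total variation distance between the one-coordinate conditionals of the corner
of the cube.**  For `m ≥ 3`, `A > 0` and `x ≠ x'` in `(0,A)`,
`d_TV(P_x, P_{x'}) = |x−x'|^{m−1} / |(A−x)^{(m−1)/(m−2)} − (A−x')^{(m−1)/(m−2)}|^{m−2}`,
and consequently
`d_TV(P_x, P_{x'}) ≤ ((m−2)/(m−1))^{m−2}·|x−x'|/(A − max(x,x'))`. -/
theorem tvDist_cornerCond
    (m : ℕ) (hm : 3 ≤ m) (A : ℝ) (hA : 0 < A)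
    (x x' : ℝ) (hx : x ∈ Set.Ioo 0 A) (hx' : x' ∈ Set.Ioo 0 A) (hxx : x ≠ x') :
    tvDist (cornerCond m A x) (cornerCond m A x') =
      |x - x'| ^ (m - 1) /
        |(A - x) ^ (((m : ℝ) - 1) / ((m : ℝ) - 2)) -
          (A - x') ^ (((m : ℝ) - 1) / ((m : ℝ) - 2))| ^ (m - 2) ∧
    tvDist (cornerCond m A x) (cornerCond m A x') ≤
      (((m : ℝ) - 2) / ((m : ℝ) - 1)) ^ (m - 2) * |x - x'| / (A - max x x') := by
  exact tvDist_cornerCond_general m hm A x x' hx.2 hx'.2 hxx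
end

section
/- Let m ≥ 3 be an integer and A > 0, and let X be a random variable with density t ↦ (m−1)(1−t)^{m−2} on (0,1). For x, x' ∈ (0,A), consider the coupling ((A−x)X, (A−x')X) of the measures P_x and P_{x'} (where P_u is the probability measure on (0,A−u) with density z ↦ (m−1)(A−u−z)^{m−2}/(A−u)^{m−1}). Then, with d(u,v) = |u−v|/(A − max(u,v)) for u, v ∈ (0,A), one has E[ d((A−x)X, (A−x')X) ] ≤ d(x,x')/(m−2). -/
open MeasureTheory

/-
For `t ∈ (0,1)` the points `(A-x)t` and `(A-x')t` are `t|x-x'|` apart and both at most `A t`, so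
their distance to `A` is at least `(1-t)A`, hence at least `(1-t)(A - max(x,x'))`. This gives
`d((A-x)X, (A-x')X) ≤ d(x,x') · X/(1-X)` pointwise. Finally `E[X/(1-X)] = 1/(m-2)`, because
multiplying the density by `t/(1-t)` leaves the elementary integral of `(m-1) t (1-t)^(m-3)`.
-/

/-- The quasi-distance `d(u,v) = |u-v|/(A - max(u,v))` on `(0,A)` in which the coupling contracts.
The level `A` is an explicit parameter; values outside `u, v < A` are junk. -/
noncomputable def cornerDist (A u v : ℝ) : ℝ :=
  |u - v| / (A - max u v)

section Pointwise

variable {A x x' t : ℝ}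

lemma cornerDist_nonneg (hx : x ≤ A) (hx' : x' ≤ A) : 0 ≤ cornerDist A x x' :=
  div_nonneg (abs_nonneg _) (sub_nonneg.2 (max_le hx hx'))

lemma sub_mul_le_mul (hx : 0 ≤ x) (ht : 0 ≤ t) : (A - x) * t ≤ A * t :=
  mul_le_mul_of_nonneg_right (sub_le_self A hx) ht

lemma cornerDist_sub_mul_nonneg (hA : 0 ≤ A) (hx : 0 ≤ x) (hx' : 0 ≤ x')
    (ht : t ∈ Set.Icc 0 1) : 0 ≤ cornerDist A ((A - x) * t) ((A - x') * t) :=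
  have hAt : A * t ≤ A := mul_le_of_le_one_right hA ht.2
  cornerDist_nonneg ((sub_mul_le_mul hx ht.1).trans hAt) ((sub_mul_le_mul hx' ht.1).trans hAt)

lemma sub_max_mul_one_sub_le (hx : 0 ≤ x) (hx' : 0 ≤ x') (ht : t ∈ Set.Icc 0 1) :
    (A - max x x') * (1 - t) ≤ A - max ((A - x) * t) ((A - x') * t) :=
  calc (A - max x x') * (1 - t)
      ≤ A * (1 - t) :=
        mul_le_mul_of_nonneg_right (sub_le_self A (le_max_of_le_left hx)) (sub_nonneg.2 ht.2)
    _ = A - A * t := by ring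
    _ ≤ A - max ((A - x) * t) ((A - x') * t) :=
        sub_le_sub_left (max_le (sub_mul_le_mul hx ht.1) (sub_mul_le_mul hx' ht.1)) A

lemma abs_sub_mul_sub_sub_mul (ht : 0 ≤ t) :
    |(A - x) * t - (A - x') * t| = |x - x'| * t := by
  rw [← sub_mul, sub_sub_sub_cancel_left, abs_mul, abs_of_nonneg ht, abs_sub_comm]

lemma cornerDist_sub_mul_le (hx : x ∈ Set.Ico 0 A) (hx' : x' ∈ Set.Ico 0 A)
    (ht : t ∈ Set.Ico 0 1) :
    cornerDist A ((A - x) * t) ((A - x') * t) ≤ cornerDist A x x' * (t / (1 - t)) := by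
  have hpos : 0 < (A - max x x') * (1 - t) :=
    mul_pos (sub_pos.2 (max_lt hx.2 hx'.2)) (sub_pos.2 ht.2)
  calc cornerDist A ((A - x) * t) ((A - x') * t)
      = |x - x'| * t / (A - max ((A - x) * t) ((A - x') * t)) := by
        rw [cornerDist, abs_sub_mul_sub_sub_mul ht.1]
    _ ≤ |x - x'| * t / ((A - max x x') * (1 - t)) :=
        div_le_div_of_nonneg_left (mul_nonneg (abs_nonneg _) ht.1) hpos
          (sub_max_mul_one_sub_le hx.1 hx'.1 (Set.Ico_subset_Icc_self ht))
    _ = cornerDist A x x' * (t / (1 - t)) := mul_div_mul_comm _ _ _ _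

lemma integral_cornerDist_sub_mul_le {Ω : Type*} [MeasurableSpace Ω] {μ : Measure Ω}
    {X w : Ω → ℝ} (hx : x ∈ Set.Ico 0 A) (hx' : x' ∈ Set.Ico 0 A)
    (hX : ∀ᵐ ω ∂μ, X ω ∈ Set.Ico 0 1) (hw : 0 ≤ᵐ[μ] w)
    (hint : Integrable (fun ω ↦ X ω / (1 - X ω) * w ω) μ) :
    ∫ ω, cornerDist A ((A - x) * X ω) ((A - x') * X ω) * w ω ∂μ ≤
      cornerDist A x x' * ∫ ω, X ω / (1 - X ω) * w ω ∂μ := by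
  rw [← integral_const_mul]
  refine integral_mono_of_nonneg ?_ (hint.const_mul _) ?_
  · filter_upwards [hX, hw] with ω hXω hwω
    exact mul_nonneg (cornerDist_sub_mul_nonneg (hx.1.trans hx.2.le) hx.1 hx'.1
      (Set.Ico_subset_Icc_self hXω)) hwω
  · filter_upwards [hX, hw] with ω hXω hwω
    rw [← mul_assoc]
    exact mul_le_mul_of_nonneg_right (cornerDist_sub_mul_le hx hx' hXω) hwω

end Pointwise

section Density

lemma intervalIntegrable_mul_one_sub_rpow {r : ℝ} (hr : -1 < r) :
    IntervalIntegrable (fun t : ℝ ↦ t * (1 - t) ^ r) volume 0 1 := by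
  have hpow : IntervalIntegrable (fun t : ℝ ↦ (1 - t) ^ r) volume 0 1 := by
    simpa only [sub_zero, sub_self] using
      ((intervalIntegral.intervalIntegrable_rpow' (a := 0) (b := 1) hr).comp_sub_left 1).symm
  exact hpow.continuousOn_mul continuousOn_id

lemma integral_mul_one_sub_rpow {r : ℝ} (hr : -1 < r) :
    ∫ t in (0 : ℝ)..1, t * (1 - t) ^ r = 1 / ((r + 1) * (r + 2)) := by
  have hr₁ : r + 1 ≠ 0 := by linarith
  have hr₂ : r + 2 ≠ 0 := by linarith
  calc ∫ t in (0 : ℝ)..1, t * (1 - t) ^ r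
      = ∫ s in (0 : ℝ)..1, (1 - s) * s ^ r := by
        simpa only [sub_sub_cancel, sub_self, sub_zero] using
          intervalIntegral.integral_comp_sub_left (a := 0) (b := 1)
            (fun s : ℝ ↦ (1 - s) * s ^ r) 1
    _ = ∫ s in (0 : ℝ)..1, (s ^ r - s ^ (r + 1)) := by
        refine intervalIntegral.integral_congr_Ioo_of_le zero_le_one fun s hs ↦ ?_
        rw [Real.rpow_add_one hs.1.ne']
        ring
    _ = 1 / (r + 1) - 1 / (r + 2) := by
        rw [intervalIntegral.integral_sub (intervalIntegral.intervalIntegrable_rpow' hr)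
            (intervalIntegral.intervalIntegrable_rpow' (by linarith)),
          integral_rpow (.inl hr), integral_rpow (.inl (by linarith)), add_assoc,
          one_add_one_eq_two]
        simp [hr₁, hr₂]
    _ = 1 / ((r + 1) * (r + 2)) := by
        field_simp
        ring

/-- The density `(m-1)(1-t)^(m-2)` on `(0,1)` of the random variable `X` driving the coupling, with
`m` allowed to be real. It is not cut off to zero outside `(0,1)`, so it is always integrated over
that interval. -/
noncomputable def cornerDensity (m t : ℝ) : ℝ :=
  (m - 1) * (1 - t) ^ (m - 2)

variable {m : ℝ}

lemma cornerDensity_nonneg {t : ℝ} (hm : 1 ≤ m) (ht : t ≤ 1) : 0 ≤ cornerDensity m t :=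
  mul_nonneg (sub_nonneg.2 hm) (Real.rpow_nonneg (sub_nonneg.2 ht) _)

lemma odds_mul_cornerDensity_eq {t : ℝ} (ht : t < 1) :
    t / (1 - t) * cornerDensity m t = (m - 1) * (t * (1 - t) ^ (m - 3)) := by
  have h : 1 - t ≠ 0 := (sub_pos.2 ht).ne'
  rw [cornerDensity, show m - 2 = m - 3 + 1 by ring, Real.rpow_add_one h]
  field_simp

lemma integrableOn_odds_mul_cornerDensity (hm : 2 < m) :
    IntegrableOn (fun t : ℝ ↦ t / (1 - t) * cornerDensity m t) (Set.Ioo 0 1) := by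
  refine IntegrableOn.congr_fun ?_ (fun t ht ↦ (odds_mul_cornerDensity_eq ht.2).symm)
    measurableSet_Ioo
  exact ((intervalIntegrable_iff_integrableOn_Ioo_of_le zero_le_one).1
    (intervalIntegrable_mul_one_sub_rpow (by linarith))).const_mul (m - 1)

lemma setIntegral_odds_mul_cornerDensity (hm : 2 < m) :
    ∫ t in Set.Ioo (0 : ℝ) 1, t / (1 - t) * cornerDensity m t = 1 / (m - 2) := by
  have hm₁ : m - 1 ≠ 0 := by linarith
  calc ∫ t in Set.Ioo (0 : ℝ) 1, t / (1 - t) * cornerDensity m t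
      = ∫ t in Set.Ioo (0 : ℝ) 1, (m - 1) * (t * (1 - t) ^ (m - 3)) :=
        setIntegral_congr_fun measurableSet_Ioo fun t ht ↦ odds_mul_cornerDensity_eq ht.2
    _ = (m - 1) * ∫ t in (0 : ℝ)..1, t * (1 - t) ^ (m - 3) := by
        rw [integral_const_mul, intervalIntegral.integral_of_le zero_le_one,
          integral_Ioc_eq_integral_Ioo]
    _ = (m - 1) * (1 / ((m - 2) * (m - 1))) := by
        rw [integral_mul_one_sub_rpow (by linarith), show m - 3 + 1 = m - 2 by ring,
          show m - 3 + 2 = m - 1 by ring]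
    _ = 1 / (m - 2) := by field_simp

end Density

theorem corner_coupling_contraction_general {m A x x' : ℝ} (hm : 2 < m)
    (hx : x ∈ Set.Ico 0 A) (hx' : x' ∈ Set.Ico 0 A) :
    ∫ t in Set.Ioo (0 : ℝ) 1,
        cornerDist A ((A - x) * t) ((A - x') * t) * cornerDensity m t ≤
      cornerDist A x x' / (m - 2) := by
  have hmem : ∀ᵐ t ∂volume.restrict (Set.Ioo (0 : ℝ) 1), t ∈ Set.Ico 0 1 :=
    ae_restrict_of_forall_mem measurableSet_Ioo fun _ ht ↦ Set.Ioo_subset_Ico_self ht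
  have hdensity : ∀ᵐ t ∂volume.restrict (Set.Ioo (0 : ℝ) 1), 0 ≤ cornerDensity m t :=
    ae_restrict_of_forall_mem measurableSet_Ioo fun t ht ↦
      cornerDensity_nonneg (by linarith) ht.2.le
  calc _ ≤ cornerDist A x x' *
          ∫ t in Set.Ioo (0 : ℝ) 1, t / (1 - t) * cornerDensity m t :=
        integral_cornerDist_sub_mul_le hx hx' hmem hdensity (integrableOn_odds_mul_cornerDensity hm)
    _ = cornerDist A x x' / (m - 2) := by
        rw [setIntegral_odds_mul_cornerDensity hm, mul_one_div]

/-- **Contraction of the multiplicative coupling for the corner of the cube.**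
Let `m ≥ 3`, `A > 0`, and let `X` have density `t ↦ (m−1)(1−t)^{m−2}` on `(0,1)`.
For `x, x' ∈ (0,A)`, the coupling `((A−x)X, (A−x')X)` of `P_x` and `P_{x'}`
satisfies, with `d(u,v) = |u−v|/(A − max(u,v))`,
`E[d((A−x)X, (A−x')X)] ≤ d(x,x')/(m−2)`. -/
theorem corner_coupling_contraction
    (m : ℕ) (hm : 3 ≤ m) (A : ℝ) (hA : 0 < A)
    (x x' : ℝ) (hx : x ∈ Set.Ioo 0 A) (hx' : x' ∈ Set.Ioo 0 A) :
    (∫ t in Set.Ioo (0 : ℝ) 1,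
        (|(A - x) * t - (A - x') * t| /
            (A - max ((A - x) * t) ((A - x') * t))) *
          (((m : ℝ) - 1) * (1 - t) ^ (m - 2))) ≤
      (|x - x'| / (A - max x x')) / ((m : ℝ) - 2) := by
  simpa only [cornerDist, cornerDensity, ← Real.rpow_natCast, Nat.cast_sub (Nat.le_of_succ_le hm),
    Nat.cast_ofNat] using corner_coupling_contraction_general (m := m) (by exact_mod_cast hm)
    (Set.Ioo_subset_Ico_self hx) (Set.Ioo_subset_Ico_self hx')
end
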